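/- Let ρ0, ρ1, ρ2, ρ3 be nonzero complex numbers such that ρ0, ρ1, −ρ2, −ρ3 all lie in the semiclosed upper half plane and Im(ρ_d/ρ_{d+1}) > 0 for d = 0, 1, 2. Then the following two conditions are equivalent: (V3) Arg ρ0 > Arg(−ρ3), Arg ρ1 > Arg(−ρ3), and Arg(−ρ2) > Arg(−ρ3); (V3') Arg ρ0 > Arg ρ1, Arg(−ρ2) > Arg ρ1, and Arg ρ1 > Arg(−ρ3). -/

import Mathlib

open Complex Real

/-!
On the semiclosed upper half plane two phases differ by less than `π`, so the sign of `Im (z / w)`,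
which is that of `sin (arg z - arg w)`, decides which of the phases is larger
(`arg_lt_arg_of_div_im_pos`). Hence every standard configuration satisfies `arg ρ1 < arg ρ0`,
`arg ρ1 < arg (-ρ2)` and `arg (-ρ3) < arg (-ρ2)`, and each of the two conditions reduces to
`arg (-ρ3) < arg ρ1`.
-/

lemma div_im_eq_cross (z w : ℂ) :
    (z / w).im = (z.im * w.re - z.re * w.im) / normSq w := by
  rw [Complex.div_im, sub_div]

lemma arg_lt_arg_of_div_im_pos {z w : ℂ} (hz : 0 < arg z) (hw : arg w ≤ π)
    (h : 0 < (z / w).im) : arg w < arg z := by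
  by_contra! hle
  have hsin : Real.sin (arg z - arg w) ≤ 0 :=
    Real.sin_nonpos_of_nonpos_of_neg_pi_le (by linarith) (by linarith)
  have hcross : z.im * w.re - z.re * w.im = ‖z‖ * ‖w‖ * Real.sin (arg z - arg w) := by
    rw [Real.sin_sub, ← norm_mul_cos_arg z, ← norm_mul_sin_arg z, ← norm_mul_cos_arg w,
      ← norm_mul_sin_arg w]
    ring
  rw [div_im_eq_cross, hcross] at h
  exact absurd h (not_lt.mpr (div_nonpos_of_nonpos_of_nonneg
    (mul_nonpos_of_nonneg_of_nonpos (by positivity) hsin) (normSq_nonneg w)))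

/-- Inverting a quotient reverses the sign of its imaginary part, and so does negating it. -/
lemma neg_div_im_pos {z w : ℂ} (hz : z ≠ 0) (h : 0 < (z / w).im) : 0 < (-w / z).im := by
  rw [div_im_eq_cross] at h ⊢
  have hc : 0 < z.im * w.re - z.re * w.im := by
    by_contra! hle
    exact absurd h (not_lt.mpr (div_nonpos_of_nonpos_of_nonneg hle (normSq_nonneg w)))
  refine div_pos ?_ (normSq_pos.mpr hz)
  rw [neg_im, neg_re]
  linarith

/-- For a standard configuration of stability vectors, condition V3 is
equivalent to condition V3'. -/
theorem stmt_5 (ρ0 ρ1 ρ2 ρ3 : ℂ)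
    (hn0 : ρ0 ≠ 0) (hn1 : ρ1 ≠ 0) (hn2 : ρ2 ≠ 0) (hn3 : ρ3 ≠ 0)
    (hu0 : 0 < arg ρ0 ∧ arg ρ0 ≤ π)
    (hu1 : 0 < arg ρ1 ∧ arg ρ1 ≤ π)
    (hu2 : 0 < arg (-ρ2) ∧ arg (-ρ2) ≤ π)
    (hu3 : 0 < arg (-ρ3) ∧ arg (-ρ3) ≤ π)
    (hq0 : 0 < (ρ0 / ρ1).im) (hq1 : 0 < (ρ1 / ρ2).im) (hq2 : 0 < (ρ2 / ρ3).im) :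
    (arg ρ0 > arg (-ρ3) ∧ arg ρ1 > arg (-ρ3) ∧ arg (-ρ2) > arg (-ρ3)) ↔
    (arg ρ0 > arg ρ1 ∧ arg (-ρ2) > arg ρ1 ∧ arg ρ1 > arg (-ρ3)) := by
  have h01 : arg ρ1 < arg ρ0 := arg_lt_arg_of_div_im_pos hu0.1 hu1.2 hq0
  have h21 : arg ρ1 < arg (-ρ2) :=
    arg_lt_arg_of_div_im_pos hu2.1 hu1.2 (neg_div_im_pos hn1 hq1)
  have h23 : arg (-ρ3) < arg (-ρ2) :=
    arg_lt_arg_of_div_im_pos hu2.1 hu3.2 (by rwa [neg_div_neg_eq])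
  exact ⟨fun h => ⟨h01, h21, h.2.1⟩, fun h => ⟨h.2.2.trans h01, h.2.2, h23⟩⟩
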